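/- Let S be a skew lattice with D-classes A > B, and let y, y' ∈ B. Then the following are equivalent: (i) A∧y∧A = A∧y'∧A (equality of cosets as sets); (ii) for all x ∈ A, x∧y∧x = x∧y'∧x; (iii) there exists x ∈ A such that x∧y∧x = x∧y'∧x. -/

import Mathlib

/-!
In a regular band, `x ⋆ u ⋆ t ⋆ v ⋆ x = (x ⋆ u ⋆ x) ⋆ t ⋆ (x ⋆ v ⋆ x)`. Hence, if `x ⋆ x' ⋆ x = x`,
conjugating by `x` turns `x' ⋆ t ⋆ x'` into `x ⋆ t ⋆ x`, so the value of `x' ⋆ t ⋆ x'` at one point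
`x'` of a `D`-class determines the values `x ⋆ t ⋆ x` at all points `x` of it.

That the meet of a skew lattice is a regular band comes from Green's relations: `x ⋆ u ⋆ x` and
`x ⋆ u` are `R`-related while `x ⋆ v ⋆ x` and `v ⋆ x` are `L`-related, so as soon as `R` and `L` are
two-sided congruences, `x ⋆ u ⋆ x ⋆ v ⋆ x` and `x ⋆ u ⋆ v ⋆ x` are related by both and thus equal.
The absorption laws make `R` and `L` congruences.
-/

section Band

variable {S : Type*} (op : S → S → S)

local infixl:70 " ⋆ " => op

/-- Green's relation `R`, in the equational form valid in bands. -/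
def GreenR (x y : S) : Prop := x ⋆ y = y ∧ y ⋆ x = x

/-- Green's relation `L`, in the equational form valid in bands. The conjuncts are ordered so that
`GreenL op` is definitionally `GreenR (flip op)`. -/
def GreenL (x y : S) : Prop := y ⋆ x = y ∧ x ⋆ y = x

/-- The natural preorder `x ≼ y` of a band, whose symmetric part is Green's relation `D`. -/
def BandLE (x y : S) : Prop := x ⋆ y ⋆ x = x

/-- The class of `a` under Green's relation `D`. -/
def greenDClass (a : S) : Set S := {x | AntisymmRel (BandLE op) x a}

/-- The coset `A ⋆ b ⋆ A`. -/
def bandCoset (A : Set S) (b : S) : Set S := {z | ∃ a ∈ A, z = a ⋆ b ⋆ a}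

/-- Regular bands: idempotent semigroups satisfying `x ⋆ y ⋆ x ⋆ z ⋆ x = x ⋆ y ⋆ z ⋆ x`. -/
class IsRegularBand : Prop extends Std.Associative op, Std.IdempotentOp op where
  regular : ∀ x y z, x ⋆ y ⋆ x ⋆ z ⋆ x = x ⋆ y ⋆ z ⋆ x

variable {op}

theorem GreenR.eq_of_greenL {x y : S} (hR : GreenR op x y) (hL : GreenL op x y) : x = y :=
  hL.2.symm.trans hR.1

section Idempotent

variable [Std.Associative op] [Std.IdempotentOp op]

theorem greenR_op_op_self (x u : S) : GreenR op (x ⋆ u ⋆ x) (x ⋆ u) := by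
  have h : x ⋆ u ⋆ (x ⋆ u) = x ⋆ u := Std.IdempotentOp.idempotent _
  constructor
  · calc x ⋆ u ⋆ x ⋆ (x ⋆ u) = x ⋆ u ⋆ (x ⋆ u) := by ac_rfl
      _ = x ⋆ u := h
  · calc x ⋆ u ⋆ (x ⋆ u ⋆ x) = x ⋆ u ⋆ (x ⋆ u) ⋆ x := by ac_rfl
      _ = x ⋆ u ⋆ x := by rw [h]

theorem greenL_op_op_self (x v : S) : GreenL op (x ⋆ v ⋆ x) (v ⋆ x) := by
  have h : v ⋆ x ⋆ (v ⋆ x) = v ⋆ x := Std.IdempotentOp.idempotent _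
  constructor
  · calc v ⋆ x ⋆ (x ⋆ v ⋆ x) = v ⋆ x ⋆ (v ⋆ x) := by ac_rfl
      _ = v ⋆ x := h
  · calc x ⋆ v ⋆ x ⋆ (v ⋆ x) = x ⋆ (v ⋆ x ⋆ (v ⋆ x)) := by ac_rfl
      _ = x ⋆ v ⋆ x := by rw [h]; ac_rfl

theorem GreenR.op_eq_of_greenL {x y w : S} (hR : GreenR op x y) (hL : GreenL op y w) :
    x ⋆ w = y := by
  have hywx : y ⋆ w ⋆ x = x := by rw [hL.2, hR.2]
  have hxwx : x ⋆ w ⋆ x = x := by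
    calc x ⋆ w ⋆ x = y ⋆ w ⋆ x ⋆ w ⋆ x := by rw [hywx]
      _ = y ⋆ (w ⋆ x ⋆ (w ⋆ x)) := by ac_rfl
      _ = y ⋆ w ⋆ x := by rw [Std.IdempotentOp.idempotent (op := op)]; ac_rfl
      _ = x := hywx
  calc x ⋆ w = x ⋆ (w ⋆ (x ⋆ y)) := by rw [hR.1, hL.1]
    _ = x ⋆ w ⋆ x ⋆ y := by ac_rfl
    _ = y := by rw [hxwx, hR.1]

theorem isRegularBand_of_green_congr
    (hR : ∀ {x y : S} (c : S), GreenR op x y → GreenR op (x ⋆ c) (y ⋆ c))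
    (hL : ∀ {x y : S} (c : S), GreenL op x y → GreenL op (c ⋆ x) (c ⋆ y)) :
    IsRegularBand op where
  regular x u v := by
    have hRuv := hR (v ⋆ x) (greenR_op_op_self x u)
    have hLuv := hL (x ⋆ u) (greenL_op_op_self x v)
    have hsplit : x ⋆ u ⋆ (x ⋆ v ⋆ x) = x ⋆ u ⋆ x ⋆ (v ⋆ x) := by ac_rfl
    rw [hsplit] at hLuv
    calc x ⋆ u ⋆ x ⋆ v ⋆ x = x ⋆ u ⋆ x ⋆ (v ⋆ x) := by ac_rfl
      _ = x ⋆ u ⋆ (v ⋆ x) := hRuv.eq_of_greenL hLuv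
      _ = x ⋆ u ⋆ v ⋆ x := by ac_rfl

end Idempotent

section Regular

variable [IsRegularBand op]

theorem op_eq_conj_op_conj (x u t v : S) :
    x ⋆ u ⋆ t ⋆ v ⋆ x = x ⋆ u ⋆ x ⋆ t ⋆ (x ⋆ v ⋆ x) := by
  calc x ⋆ u ⋆ t ⋆ v ⋆ x = x ⋆ u ⋆ (t ⋆ v) ⋆ x := by ac_rfl
    _ = x ⋆ u ⋆ x ⋆ (t ⋆ v) ⋆ x := (IsRegularBand.regular x u (t ⋆ v)).symm
    _ = x ⋆ u ⋆ (x ⋆ t ⋆ v ⋆ x) := by ac_rfl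
    _ = x ⋆ u ⋆ (x ⋆ t ⋆ x ⋆ v ⋆ x) := by rw [IsRegularBand.regular (op := op) x t v]
    _ = x ⋆ u ⋆ x ⋆ t ⋆ (x ⋆ v ⋆ x) := by ac_rfl

theorem BandLE.conj_conj {x x' : S} (h : BandLE op x x') (t : S) :
    x ⋆ (x' ⋆ t ⋆ x') ⋆ x = x ⋆ t ⋆ x := by
  calc x ⋆ (x' ⋆ t ⋆ x') ⋆ x = x ⋆ x' ⋆ t ⋆ x' ⋆ x := by ac_rfl
    _ = x ⋆ x' ⋆ x ⋆ t ⋆ (x ⋆ x' ⋆ x) := op_eq_conj_op_conj x x' t x'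
    _ = x ⋆ t ⋆ x := by rw [h]

theorem BandLE.trans {x y z : S} (hxy : BandLE op x y) (hyz : BandLE op y z) : BandLE op x z :=
  calc x ⋆ z ⋆ x = x ⋆ (y ⋆ z ⋆ y) ⋆ x := (hxy.conj_conj z).symm
    _ = x := by rw [hyz, hxy]

instance : IsPreorder S (BandLE op) where
  refl x := by simp only [BandLE, Std.IdempotentOp.idempotent]
  trans _ _ _ := BandLE.trans

theorem bandLE_of_mem_greenDClass {a x x' : S} (hx : x ∈ greenDClass op a)
    (hx' : x' ∈ greenDClass op a) : BandLE op x x' :=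
  (AntisymmRel.trans hx (AntisymmRel.symm hx')).1

theorem BandLE.conj_eq_of_conj_eq {x a a' y y' : S} (ha : BandLE op x a) (ha' : BandLE op x a')
    (h : a ⋆ y ⋆ a = a' ⋆ y' ⋆ a') : x ⋆ y ⋆ x = x ⋆ y' ⋆ x := by
  rw [← ha.conj_conj y, h, ha'.conj_conj y']

theorem coset_eq_tfae_general (a₀ y y' : S) :
    [bandCoset op (greenDClass op a₀) y = bandCoset op (greenDClass op a₀) y',
      ∀ x ∈ greenDClass op a₀, x ⋆ y ⋆ x = x ⋆ y' ⋆ x,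
      ∃ x ∈ greenDClass op a₀, x ⋆ y ⋆ x = x ⋆ y' ⋆ x].TFAE := by
  have ha₀ : a₀ ∈ greenDClass op a₀ := AntisymmRel.refl _ a₀
  tfae_have 1 → 2 := by
    intro h x hx
    obtain ⟨a, ha, hxa⟩ : x ⋆ y ⋆ x ∈ bandCoset op (greenDClass op a₀) y' := h ▸ ⟨x, hx, rfl⟩
    exact (refl x : BandLE op x x).conj_eq_of_conj_eq (bandLE_of_mem_greenDClass hx ha) hxa
  tfae_have 2 → 1 := fun h => Set.ext fun z =>
    exists_congr fun a => and_congr_right fun ha => by rw [h a ha]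
  tfae_have 2 → 3 := fun h => ⟨a₀, ha₀, h a₀ ha₀⟩
  tfae_have 3 → 2 := by
    rintro ⟨a, ha, h⟩ x hx
    have hxa := bandLE_of_mem_greenDClass hx ha
    exact hxa.conj_eq_of_conj_eq hxa h
  tfae_finish

end Regular

end Band

section SkewLattice

variable {S : Type*} (wedge vee : S → S → S)

local infixl:70 " ⋏ " => wedge

local infixl:70 " ⋎ " => vee

/-- Skew lattices, as a predicate on the meet `⋏` and the join `⋎`. -/
structure IsSkewLattice : Prop where
  wedge_idem : ∀ x, x ⋏ x = x
  vee_idem : ∀ x, x ⋎ x = x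
  wedge_assoc : ∀ x y z, x ⋏ y ⋏ z = x ⋏ (y ⋏ z)
  vee_assoc : ∀ x y z, x ⋎ y ⋎ z = x ⋎ (y ⋎ z)
  wedge_vee_self : ∀ x y, x ⋏ (x ⋎ y) = x
  vee_right_wedge : ∀ x y, (y ⋎ x) ⋏ x = x
  vee_wedge_self : ∀ x y, x ⋎ (x ⋏ y) = x
  wedge_right_vee : ∀ x y, (y ⋏ x) ⋎ x = x

namespace IsSkewLattice

variable {wedge vee}

theorem flip (h : IsSkewLattice wedge vee) : IsSkewLattice (flip wedge) (flip vee) where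
  wedge_idem := h.wedge_idem
  vee_idem := h.vee_idem
  wedge_assoc x y z := (h.wedge_assoc z y x).symm
  vee_assoc x y z := (h.vee_assoc z y x).symm
  wedge_vee_self := h.vee_right_wedge
  vee_right_wedge := h.wedge_vee_self
  vee_wedge_self := h.wedge_right_vee
  wedge_right_vee := h.vee_wedge_self

theorem wedge_eq_left_iff_vee_eq_right (h : IsSkewLattice wedge vee) {x y : S} :
    x ⋏ y = x ↔ x ⋎ y = y :=
  ⟨fun hxy => hxy ▸ h.wedge_right_vee y x, fun hxy => hxy ▸ h.wedge_vee_self x y⟩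

theorem greenL_wedge_iff_greenR_vee (h : IsSkewLattice wedge vee) {x y : S} :
    GreenL wedge x y ↔ GreenR vee x y := by
  rw [GreenL, GreenR, h.wedge_eq_left_iff_vee_eq_right, h.wedge_eq_left_iff_vee_eq_right, and_comm]

theorem greenL_vee_wedge (h : IsSkewLattice wedge vee) (y c : S) :
    GreenL wedge y (y ⋎ (c ⋏ y)) := by
  refine h.greenL_wedge_iff_greenR_vee.2 ⟨?_, ?_⟩
  · rw [← h.vee_assoc, h.vee_idem]
  · rw [h.vee_assoc, h.wedge_right_vee, h.vee_idem]

theorem wedge_wedge_eq_of_greenR (h : IsSkewLattice wedge vee) {x y : S}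
    (hxy : GreenR wedge x y) (c : S) : x ⋏ (c ⋏ y) = y ⋏ (c ⋏ y) := by
  have : Std.Associative wedge := ⟨h.wedge_assoc⟩
  have : Std.IdempotentOp wedge := ⟨h.wedge_idem⟩
  -- Replace `x ⋏ _` by `y ⋏ _` through an element above `c ⋏ y` that is `L`-related to `y`.
  have hw : x ⋏ (y ⋎ (c ⋏ y)) = y := hxy.op_eq_of_greenL (h.greenL_vee_wedge y c)
  calc x ⋏ (c ⋏ y) = x ⋏ ((y ⋎ (c ⋏ y)) ⋏ (c ⋏ y)) := by rw [h.vee_right_wedge]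
    _ = y ⋏ (c ⋏ y) := by rw [← h.wedge_assoc, hw]

theorem greenR_wedge_right (h : IsSkewLattice wedge vee) {x y : S} (c : S)
    (hxy : GreenR wedge x y) : GreenR wedge (x ⋏ c) (y ⋏ c) := by
  have absorb {u v : S} (huv : GreenR wedge u v) : u ⋏ c ⋏ (v ⋏ c) = v ⋏ c :=
    calc u ⋏ c ⋏ (v ⋏ c) = u ⋏ (c ⋏ v) ⋏ c := by simp only [h.wedge_assoc]
      _ = v ⋏ (c ⋏ v) ⋏ c := by rw [h.wedge_wedge_eq_of_greenR huv]
      _ = v ⋏ c ⋏ (v ⋏ c) := by simp only [h.wedge_assoc]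
      _ = v ⋏ c := h.wedge_idem _
  exact ⟨absorb hxy, absorb hxy.symm⟩

theorem greenL_wedge_left (h : IsSkewLattice wedge vee) {x y : S} (c : S)
    (hxy : GreenL wedge x y) : GreenL wedge (c ⋏ x) (c ⋏ y) :=
  h.flip.greenR_wedge_right c hxy

theorem isRegularBand (h : IsSkewLattice wedge vee) : IsRegularBand wedge :=
  have : Std.Associative wedge := ⟨h.wedge_assoc⟩
  have : Std.IdempotentOp wedge := ⟨h.wedge_idem⟩
  isRegularBand_of_green_congr h.greenR_wedge_right h.greenL_wedge_left

end IsSkewLattice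

end SkewLattice

/-- Equality of cosets A∧y∧A = A∧y'∧A is equivalent to the pointwise conditions. -/
theorem coset_eq_tfae {S : Type*} (wedge vee : S → S → S)
    (wedge_idem : ∀ x : S, wedge x x = x)
    (vee_idem : ∀ x : S, vee x x = x)
    (wedge_assoc : ∀ x y z : S, wedge (wedge x y) z = wedge x (wedge y z))
    (vee_assoc : ∀ x y z : S, vee (vee x y) z = vee x (vee y z))
    (abs₁ : ∀ x y : S, wedge x (vee x y) = x)
    (abs₂ : ∀ x y : S, wedge (vee y x) x = x)
    (abs₃ : ∀ x y : S, vee x (wedge x y) = x)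
    (abs₄ : ∀ x y : S, vee (wedge y x) x = x)
    (a₀ b₀ : S) (hAB : wedge (wedge b₀ a₀) b₀ = b₀)
    (A : Set S) (hA : A = {x | wedge (wedge x a₀) x = x ∧ wedge (wedge a₀ x) a₀ = a₀})
    (B : Set S) (hB : B = {x | wedge (wedge x b₀) x = x ∧ wedge (wedge b₀ x) b₀ = b₀})
    (y y' : S) (hy : y ∈ B) (hy' : y' ∈ B) :
    ({z | ∃ a ∈ A, z = wedge (wedge a y) a} = {z | ∃ a ∈ A, z = wedge (wedge a y') a} ↔
        ∀ x ∈ A, wedge (wedge x y) x = wedge (wedge x y') x) ∧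
      ((∀ x ∈ A, wedge (wedge x y) x = wedge (wedge x y') x) ↔
        ∃ x ∈ A, wedge (wedge x y) x = wedge (wedge x y') x) := by
  have : IsRegularBand wedge := IsSkewLattice.isRegularBand (vee := vee)
    ⟨wedge_idem, vee_idem, wedge_assoc, vee_assoc, abs₁, abs₂, abs₃, abs₄⟩
  subst hA
  have h := coset_eq_tfae_general (op := wedge) a₀ y y'
  exact ⟨h.out 0 1, h.out 1 2⟩
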